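/- Let k be a commutative ring, G a finite group and C ⊆ G \ {e} closed under inversion, and let Δ be the canonical edge Laplacian of the Cayley graph of (G,C) over k. Then: (i) for every a ∈ C, Δe_a = |C|·e_a − θ; (ii) if v : C → (G → k) satisfies Σ_{a ∈ C}(2·v_a(x·a⁻¹) − v_a(x)) = 0 for all x ∈ G, then the 1-form ω defined by ω(x, xa) = v_a(x) satisfies Δω = |C|·ω (with |C| regarded as an element of k). -/

import Mathlib

open Finset

/-- The canonical edge Laplacian of the Cayley graph of `(G, C)` acting on 1-forms:
`(Δω)(x,y) = deg(x)·ω(x,y) − 2·Σ_{w~x} ω(w,x) + Σ_{z~x} ω(x,z)`, where `w ~ x` iff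
`x⁻¹w ∈ C`. -/
def cayleyEdgeLap {k : Type*} [CommRing k] {G : Type*} [Group G] [Fintype G]
    [DecidableEq G] (C : Finset G) (ω : G → G → k) : G → G → k :=
  fun x y =>
    ((Finset.univ.filter (fun z : G => x⁻¹ * z ∈ C)).card : k) * ω x y
      - 2 * (∑ w : G, if x⁻¹ * w ∈ C then ω w x else 0)
      + ∑ z : G, if x⁻¹ * z ∈ C then ω x z else 0

/-!
Left translation by `x` identifies the neighbours of `x` with `C`, and since `C = C⁻¹` the edges
into `x` are the pairs `(x * a⁻¹, x)` with `a ∈ C`. Hence `Δω - |C| • ω` at `(x, y)` is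
`-∑ a ∈ C, (2 * ω (x * a⁻¹) x - ω x (x * a))`, which depends only on `x`: this sum is `1` for
`ω = e_a`, and for `ω = ∑ a ∈ C, v_a • e_a` it is the sum assumed to vanish.
-/

section Neighbors

variable {G : Type*} [Group G] [Fintype G] [DecidableEq G]

theorem sum_ite_inv_mul_mem {M : Type*} [AddCommMonoid M] (C : Finset G) (x : G) (f : G → M) :
    (∑ z, if x⁻¹ * z ∈ C then f z else 0) = ∑ a ∈ C, f (x * a) := by
  rw [← Equiv.sum_comp (Equiv.mulLeft x)]
  simp [Finset.sum_ite_mem]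

theorem card_filter_inv_mul_mem (C : Finset G) (x : G) :
    #{z | x⁻¹ * z ∈ C} = #C := by
  rw [card_filter, sum_ite_inv_mul_mem, card_eq_sum_ones]

end Neighbors

theorem sum_comp_inv_of_inv_mem {G M : Type*} [InvolutiveInv G] [AddCommMonoid M] {C : Finset G}
    (hC : ∀ a ∈ C, a⁻¹ ∈ C) (f : G → M) : ∑ a ∈ C, f a⁻¹ = ∑ a ∈ C, f a :=
  sum_nbij' (·⁻¹) (·⁻¹) hC hC (fun a _ ↦ inv_inv a) (fun a _ ↦ inv_inv a) fun _ _ ↦ rfl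

section Forms

variable {k G : Type*} [Zero k] [Group G] [DecidableEq G]

/-- The 1-form `e_a`, extended by the same formula to all pairs of vertices. -/
def basisForm [One k] (a : G) : G → G → k :=
  fun x y ↦ if x⁻¹ * y = a then 1 else 0

/-- The 1-form `∑ a ∈ C, v_a • e_a` with coefficient functions `v_a = v a`, extended by zero to
the pairs that are not edges. -/
def coeffForm (C : Finset G) (v : G → G → k) : G → G → k :=
  fun x y ↦ if x⁻¹ * y ∈ C then v (x⁻¹ * y) x else 0

theorem coeffForm_apply_of_mem {C : Finset G} {x y : G} (hxy : x⁻¹ * y ∈ C)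
    (v : G → G → k) : coeffForm C v x y = v (x⁻¹ * y) x :=
  if_pos hxy

end Forms

section Laplacian

variable {k : Type*} [CommRing k] {G : Type*} [Group G] [Fintype G] [DecidableEq G] {C : Finset G}

theorem cayleyEdgeLap_apply_eq_card_mul_sub_sum (hC : ∀ a ∈ C, a⁻¹ ∈ C) (ω : G → G → k) (x y : G) :
    cayleyEdgeLap C ω x y
      = #C * ω x y - ∑ a ∈ C, (2 * ω (x * a⁻¹) x - ω x (x * a)) := by
  have sum_incoming : (∑ w, if x⁻¹ * w ∈ C then ω w x else 0) = ∑ a ∈ C, ω (x * a⁻¹) x := by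
    rw [sum_ite_inv_mul_mem C x (ω · x), sum_comp_inv_of_inv_mem hC fun a ↦ ω (x * a) x]
  rw [cayleyEdgeLap, card_filter_inv_mul_mem, sum_incoming, sum_ite_inv_mul_mem,
    sum_sub_distrib, ← mul_sum, sub_sub_eq_add_sub, sub_add_eq_add_sub]

theorem cayleyEdgeLap_basisForm (hC : ∀ a ∈ C, a⁻¹ ∈ C) {a : G} (ha : a ∈ C) :
    cayleyEdgeLap C (basisForm (k := k) a) = (#C : k) • basisForm a - 1 := by
  ext x y
  have sum_eq_one :
      ∑ b ∈ C, (2 * basisForm a (x * b⁻¹) x - basisForm a x (x * b)) = (1 : k) := by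
    calc
      _ = ∑ b ∈ C, if b = a then (1 : k) else 0 :=
        sum_congr rfl fun b _ ↦ by
          simp only [basisForm, mul_inv_rev, inv_inv, inv_mul_cancel_right, inv_mul_cancel_left]
          ring
      _ = 1 := by rw [sum_ite_eq', if_pos ha]
  rw [cayleyEdgeLap_apply_eq_card_mul_sub_sum hC, sum_eq_one]
  rfl

theorem cayleyEdgeLap_coeffForm_apply (hC : ∀ a ∈ C, a⁻¹ ∈ C) (v : G → G → k) (x y : G) :
    cayleyEdgeLap C (coeffForm C v) x y
      = #C * coeffForm C v x y - ∑ a ∈ C, (2 * v a (x * a⁻¹) - v a x) := by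
  rw [cayleyEdgeLap_apply_eq_card_mul_sub_sum hC]
  congr 1
  exact sum_congr rfl fun a ha ↦ by simp [coeffForm, ha]

theorem cayleyEdgeLap_coeffForm_eq_card_smul (hC : ∀ a ∈ C, a⁻¹ ∈ C) {v : G → G → k}
    (hv : ∀ x, ∑ a ∈ C, (2 * v a (x * a⁻¹) - v a x) = 0) :
    cayleyEdgeLap C (coeffForm C v) = (#C : k) • coeffForm C v := by
  ext x y
  rw [cayleyEdgeLap_coeffForm_apply hC, hv, sub_zero]
  rfl

end Laplacian

/-- on a Cayley graph, (i) `Δe_a = |C|·e_a − θ`; (ii) any 1-form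
`ω(x,xa) = v_a(x)` with `Σ_{a∈C}(2·v_a(xa⁻¹) − v_a(x)) = 0` is an eigenvector of the
canonical edge Laplacian with eigenvalue `|C|`. -/
theorem stmt_18 {k : Type*} [CommRing k] {G : Type*} [Group G] [Fintype G]
    [DecidableEq G] (C : Finset G) (hC1 : (1 : G) ∉ C) (hCinv : ∀ a ∈ C, a⁻¹ ∈ C) :
    (∀ a ∈ C, ∀ x y : G, x⁻¹ * y ∈ C →
        cayleyEdgeLap C (fun u v : G => if u⁻¹ * v = a then (1 : k) else 0) x y
          = (C.card : k) * (if x⁻¹ * y = a then (1 : k) else 0) - 1) ∧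
    (∀ v : G → G → k,
        (∀ x : G, (∑ a ∈ C, (2 * v a (x * a⁻¹) - v a x)) = 0) →
        ∀ x y : G, x⁻¹ * y ∈ C →
          cayleyEdgeLap C
              (fun u w : G => if u⁻¹ * w ∈ C then v (u⁻¹ * w) u else 0) x y
            = (C.card : k) * v (x⁻¹ * y) x) := by
  refine ⟨fun a ha x y _ ↦ ?_, fun v hv x y hxy ↦ ?_⟩
  · exact congr_fun₂ (cayleyEdgeLap_basisForm hCinv ha) x y
  · rw [← coeffForm_apply_of_mem hxy v]
    exact congr_fun₂ (cayleyEdgeLap_coeffForm_eq_card_smul hCinv hv) x y
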